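/- For all a, b ∈ ℝ, 2 I_β(a,b) + φ^β(a,b) + φ^β(b,a) = (1/2) ∫_a^b ∫_a^b β''(μ−σ) ( g(μ) − g(σ) )² dμ dσ. -/

import Mathlib

/-!
Expand the square on the right. By symmetry of `β''(μ - σ)`, the two diagonal terms contribute
equally, and integrating the kernel in one variable turns them into the boundary terms
`φ^β(a,b) + φ^β(b,a)`. The cross term is the integral over the square of a symmetric function, hence
twice its integral over the triangle between `a` and `μ`, which is `-I_β(a,b)`.
-/

open MeasureTheory Set
open scoped Interval InnerProductSpace

section Parity

variable {𝕜 F : Type*} [NontriviallyNormedField 𝕜] [NormedAddCommGroup F] [NormedSpace 𝕜 F]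
  {f : 𝕜 → F}

lemma odd_deriv_of_even (hf : f.Even) : (deriv f).Odd := fun x ↦ by
  have h := deriv_comp_neg f x
  rw [funext hf] at h
  rw [h, neg_neg]

lemma even_deriv_of_odd (hf : f.Odd) : (deriv f).Even := fun x ↦ by
  have h := deriv_comp_neg f x
  rw [funext hf, deriv.fun_neg] at h
  exact (neg_injective h).symm

end Parity

section SymmetricKernel

variable {α E : Type*} [MeasurableSpace α] [NormedAddCommGroup E] [NormedSpace ℝ E]
  {ν : Measure α} [SFinite ν]

lemma ae_prod_fst_ne_snd [MeasurableEq α] [NullSingletonClass ν] : ∀ᵐ p ∂ν.prod ν, p.1 ≠ p.2 := by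
  have hmeas : MeasurableSet {p : α × α | p.1 ≠ p.2} := measurableSet_diagonal.compl
  rw [Measure.ae_prod_iff_ae_ae hmeas]
  filter_upwards with x
  filter_upwards [ν.ae_ne x] with y hy using hy.symm

lemma setIntegral_preimage_swap_of_symm {f : α × α → E} (hsymm : ∀ p, f p.swap = f p)
    (s : Set (α × α)) :
    ∫ p in Prod.swap ⁻¹' s, f p ∂ν.prod ν = ∫ p in s, f p ∂ν.prod ν := by
  simpa only [hsymm] using Measure.measurePreserving_swap.setIntegral_preimage_emb
    (MeasurableEquiv.prodComm (α := α) (β := α)).measurableEmbedding f s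

lemma integral_prod_eq_two_smul_setIntegral_of_symm {f : α × α → E}
    (hf : Integrable f (ν.prod ν)) (hsymm : ∀ p, f p.swap = f p) {s : Set (α × α)}
    (hs : MeasurableSet s) (hswap : Prod.swap ⁻¹' s =ᵐ[ν.prod ν] (sᶜ : Set (α × α))) :
    ∫ p, f p ∂ν.prod ν = (2 : ℝ) • ∫ p in s, f p ∂ν.prod ν := by
  rw [← integral_add_compl hs hf, ← setIntegral_congr_set hswap,
    setIntegral_preimage_swap_of_symm hsymm, two_smul]

end SymmetricKernel

section Triangle

variable {E : Type*} [NormedAddCommGroup E] [NormedSpace ℝ E] {ν : Measure ℝ} {a b : ℝ}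

lemma intervalIntegral_eq_smul_setIntegral_of_mem_uIoc {x : ℝ} (hx : x ∈ Ι a b) (f : ℝ → E) :
    ∫ y in a..x, f y ∂ν = (if a ≤ b then 1 else -1 : ℝ) • ∫ y in Ι a x, f y ∂ν := by
  rcases eq_or_ne x a with rfl | hxa
  · simp
  · have hiff : a ≤ x ↔ a ≤ b := by grind [mem_uIoc]
    simp only [intervalIntegral.intervalIntegral_eq_integral_uIoc, hiff]

lemma measurableSet_snd_mem_uIoc (a : ℝ) : MeasurableSet {p : ℝ × ℝ | p.2 ∈ Ι a p.1} :=
  (measurableSet_lt (measurable_const.min measurable_fst) measurable_snd).inter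
    (measurableSet_le measurable_snd (measurable_const.max measurable_fst))

lemma intervalIntegral_intervalIntegral_eq_integral_prod [SFinite ν] {f : ℝ × ℝ → E}
    (hf : Integrable f ((ν.restrict (Ι a b)).prod (ν.restrict (Ι a b)))) :
    ∫ x in a..b, ∫ y in a..b, f (x, y) ∂ν ∂ν
      = ∫ p, f p ∂(ν.restrict (Ι a b)).prod (ν.restrict (Ι a b)) := by
  rw [integral_prod f hf]
  simp only [intervalIntegral.intervalIntegral_eq_integral_uIoc, integral_smul, smul_smul]
  split_ifs <;> simp

-- Both oriented integrals carry the sign of `b - a`, so the signs cancel.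
lemma intervalIntegral_triangle_eq_setIntegral_prod [SFinite ν] {f : ℝ × ℝ → E}
    (hf : Integrable f ((ν.restrict (Ι a b)).prod (ν.restrict (Ι a b)))) :
    ∫ x in a..b, ∫ y in a..x, f (x, y) ∂ν ∂ν
      = ∫ p in {p | p.2 ∈ Ι a p.1}, f p ∂(ν.restrict (Ι a b)).prod (ν.restrict (Ι a b)) := by
  have hT := measurableSet_snd_mem_uIoc a
  have hslice : ∀ x ∈ Ι a b, ∫ y in a..x, f (x, y) ∂ν = (if a ≤ b then 1 else -1 : ℝ) •
      ∫ y in Ι a b, {p : ℝ × ℝ | p.2 ∈ Ι a p.1}.indicator f (x, y) ∂ν := fun x hx ↦ by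
    have hsub : Ι a b ∩ Ι a x = Ι a x := inter_eq_right.2 fun y hy ↦ by grind [mem_uIoc]
    have hind : (fun y ↦ {p : ℝ × ℝ | p.2 ∈ Ι a p.1}.indicator f (x, y))
        = (Ι a x).indicator fun y ↦ f (x, y) := rfl
    rw [intervalIntegral_eq_smul_setIntegral_of_mem_uIoc hx, hind,
      setIntegral_indicator measurableSet_uIoc, hsub]
  rw [← integral_indicator hT, integral_prod _ (hf.indicator hT),
    intervalIntegral.intervalIntegral_eq_integral_uIoc,
    setIntegral_congr_fun measurableSet_uIoc hslice, integral_smul, smul_smul]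
  split_ifs <;> simp

lemma preimage_swap_snd_mem_uIoc_ae_eq_compl [SFinite ν] [NullSingletonClass ν] :
    Prod.swap ⁻¹' {p : ℝ × ℝ | p.2 ∈ Ι a p.1}
      =ᵐ[(ν.restrict (Ι a b)).prod (ν.restrict (Ι a b))]
        ({p : ℝ × ℝ | p.2 ∈ Ι a p.1}ᶜ : Set (ℝ × ℝ)) := by
  have hmem : ∀ᵐ p ∂(ν.restrict (Ι a b)).prod (ν.restrict (Ι a b)), p ∈ Ι a b ×ˢ Ι a b := by
    rw [Measure.prod_restrict]
    exact ae_restrict_mem (measurableSet_uIoc.prod measurableSet_uIoc)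
  refine Filter.eventuallyEq_set.2 ?_
  filter_upwards [hmem, ae_prod_fst_ne_snd] with ⟨x, y⟩ ⟨hx, hy⟩ hne
  simp only [mem_preimage, Prod.swap_prod_mk, mem_ofPred_eq, mem_compl_iff, mem_uIoc] at hx hy hne ⊢
  grind

lemma intervalIntegral_square_eq_two_smul_triangle_of_symm [SFinite ν] [NullSingletonClass ν]
    {f : ℝ × ℝ → E} (hf : Integrable f ((ν.restrict (Ι a b)).prod (ν.restrict (Ι a b))))
    (hsymm : ∀ p, f p.swap = f p) :
    ∫ x in a..b, ∫ y in a..b, f (x, y) ∂ν ∂ν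
      = (2 : ℝ) • ∫ x in a..b, ∫ y in a..x, f (x, y) ∂ν ∂ν := by
  rw [intervalIntegral_intervalIntegral_eq_integral_prod hf,
    intervalIntegral_triangle_eq_setIntegral_prod hf]
  exact integral_prod_eq_two_smul_setIntegral_of_symm hf hsymm (measurableSet_snd_mem_uIoc a)
    preimage_swap_snd_mem_uIoc_ae_eq_compl

end Triangle

section Polarization

variable {α E : Type*} [MeasurableSpace α] [NormedAddCommGroup E] [InnerProductSpace ℝ E]
  {ν : Measure α} {g : α → E}

lemma integrable_prod_inner (hg : Integrable g ν) :
    Integrable (fun p : α × α ↦ ⟪g p.1, g p.2⟫_ℝ) (ν.prod ν) :=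
  hg.op_fst_snd (op := fun x y ↦ ⟪x, y⟫_ℝ) continuous_inner
    ⟨1, fun x y ↦ by simpa using norm_inner_le_norm (𝕜 := ℝ) x y⟩ hg

lemma integral_prod_mul_norm_sub_sq [SFinite ν] {k : α × α → ℝ} (hsymm : ∀ p, k p.swap = k p)
    (hsq : Integrable (fun p ↦ k p * ‖g p.1‖ ^ 2) (ν.prod ν))
    (hinner : Integrable (fun p ↦ k p * ⟪g p.1, g p.2⟫_ℝ) (ν.prod ν)) :
    ∫ p, k p * ‖g p.1 - g p.2‖ ^ 2 ∂ν.prod ν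
      = 2 * ∫ p, k p * ‖g p.1‖ ^ 2 ∂ν.prod ν - 2 * ∫ p, k p * ⟪g p.1, g p.2⟫_ℝ ∂ν.prod ν := by
  have hswap : (fun p : α × α ↦ k p * ‖g p.2‖ ^ 2) = (fun p ↦ k p * ‖g p.1‖ ^ 2) ∘ Prod.swap := by
    ext p
    simp only [Function.comp_apply, hsymm, Prod.fst_swap]
  have hsq' : Integrable (fun p ↦ k p * ‖g p.2‖ ^ 2) (ν.prod ν) := by
    rw [hswap]
    exact hsq.swap
  have hint : ∫ p, k p * ‖g p.2‖ ^ 2 ∂ν.prod ν = ∫ p, k p * ‖g p.1‖ ^ 2 ∂ν.prod ν := by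
    rw [hswap]
    exact integral_prod_swap fun p ↦ k p * ‖g p.1‖ ^ 2
  have hexpand (p : α × α) : k p * ‖g p.1 - g p.2‖ ^ 2
      = k p * ‖g p.1‖ ^ 2 + k p * ‖g p.2‖ ^ 2 - 2 * (k p * ⟪g p.1, g p.2⟫_ℝ) := by
    rw [norm_sub_sq_real]
    ring
  simp only [hexpand]
  rw [integral_sub (by exact hsq.add hsq') (hinner.const_mul 2), integral_add hsq hsq', hint,
    integral_const_mul, ← two_mul]

end Polarization

section IntervalKernel

variable {E : Type*} [NormedAddCommGroup E] {ν : Measure ℝ} {a b : ℝ}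

instance isFiniteMeasure_restrict_uIoc [IsLocallyFiniteMeasure ν] :
    IsFiniteMeasure (ν.restrict (Ι a b)) :=
  ⟨by simp only [Measure.restrict_apply_univ, uIoc, measure_Ioc_lt_top]⟩

lemma integrable_prod_mul_uIoc [SFinite ν] {k f : ℝ × ℝ → ℝ} (hk : Continuous k)
    (hf : Integrable f ((ν.restrict (Ι a b)).prod (ν.restrict (Ι a b)))) :
    Integrable (fun p ↦ k p * f p) ((ν.restrict (Ι a b)).prod (ν.restrict (Ι a b))) := by
  rw [Measure.prod_restrict] at hf ⊢
  exact IntegrableOn.continuousOn_mul_of_subset hk.continuousOn hf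
    (isCompact_uIcc.prod isCompact_uIcc) (measurableSet_uIoc.prod measurableSet_uIoc)
    (prod_mono uIoc_subset_uIcc uIoc_subset_uIcc)

lemma intervalIntegral_deriv_comp_sub_left {A : ℝ → ℝ} (hA : ContDiff ℝ 1 A) (a b x : ℝ) :
    ∫ y in a..b, deriv A (x - y) = A (x - a) - A (x - b) := by
  rw [intervalIntegral.integral_comp_sub_left (deriv A) x]
  exact intervalIntegral.integral_deriv_eq_sub
    (fun y _ ↦ hA.differentiable one_ne_zero y)
    ((hA.continuous_deriv le_rfl).intervalIntegrable _ _)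

lemma intervalIntegral_comp_sub_smul_add_comp_sub_smul [NormedSpace ℝ E] [CompleteSpace E]
    {A : ℝ → ℝ} (hA : ContDiff ℝ 1 A) {h : ℝ → E} (hh : IntervalIntegrable h volume a b) :
    (∫ x in b..a, A (x - b) • h x) + (∫ x in a..b, A (x - a) • h x)
      = ∫ x in a..b, ∫ y in a..b, deriv A (x - y) • h x := by
  have hA_cont := hA.continuous
  have hint (c : ℝ) : IntervalIntegrable (fun x ↦ A (x - c) • h x) volume a b :=
    hh.continuousOn_smul (by fun_prop)
  have hinner (x : ℝ) : ∫ y in a..b, deriv A (x - y) • h x = A (x - a) • h x - A (x - b) • h x := by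
    rw [intervalIntegral.integral_smul_const, intervalIntegral_deriv_comp_sub_left hA, sub_smul]
  simp only [hinner]
  rw [intervalIntegral.integral_sub (hint a) (hint b), intervalIntegral.integral_symm a b]
  abel

lemma intervalIntegral_inner_intervalIntegral_smul [InnerProductSpace ℝ E] [CompleteSpace E]
    {k : ℝ × ℝ → ℝ} (hk : Continuous k) {g : ℝ → E} (hg : IntervalIntegrable g ν a b) :
    ∫ x in a..b, ⟪∫ y in x..a, k (x, y) • g y ∂ν, g x⟫_ℝ ∂ν
      = -∫ x in a..b, ∫ y in a..x, k (x, y) * ⟪g x, g y⟫_ℝ ∂ν ∂ν := by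
  rw [← intervalIntegral.integral_neg]
  refine intervalIntegral.integral_congr fun x hx ↦ ?_
  have hint : IntervalIntegrable (fun y ↦ k (x, y) • g y) ν a x :=
    (hg.mono_set (uIcc_subset_uIcc_left hx)).continuousOn_smul (by fun_prop)
  simp only [← real_inner_smul_right]
  rw [intervalIntegral.integral_symm, inner_neg_left, real_inner_comm]
  exact congrArg Neg.neg ((innerSL ℝ (g x)).intervalIntegral_comp_comm hint).symm

lemma intervalIntegral_mul_norm_sub_sq [InnerProductSpace ℝ E] [IsLocallyFiniteMeasure ν]
    [NullSingletonClass ν] {k : ℝ × ℝ → ℝ} (hk : Continuous k) (hsymm : ∀ p, k p.swap = k p)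
    {g : ℝ → E} (hg : MemLp g 2 (ν.restrict (Ι a b))) :
    ∫ x in a..b, ∫ y in a..b, k (x, y) * ‖g x - g y‖ ^ 2 ∂ν ∂ν
      = 2 * (∫ x in a..b, ∫ y in a..b, k (x, y) * ‖g x‖ ^ 2 ∂ν ∂ν)
        - 4 * ∫ x in a..b, ∫ y in a..x, k (x, y) * ⟪g x, g y⟫_ℝ ∂ν ∂ν := by
  have hsq := integrable_prod_mul_uIoc hk ((hg.integrable_norm_pow two_ne_zero).comp_fst _)
  have hinner := integrable_prod_mul_uIoc hk (integrable_prod_inner (hg.integrable one_le_two))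
  have hsub := integrable_prod_mul_uIoc hk
    (((hg.comp_fst _).sub (hg.comp_snd _)).integrable_norm_pow two_ne_zero)
  have hinner_symm (p : ℝ × ℝ) :
      k p.swap * ⟪g p.swap.1, g p.swap.2⟫_ℝ = k p * ⟪g p.1, g p.2⟫_ℝ := by
    rw [hsymm, Prod.fst_swap, Prod.snd_swap, real_inner_comm]
  have htriangle := intervalIntegral_square_eq_two_smul_triangle_of_symm hinner hinner_symm
  have hpolar := integral_prod_mul_norm_sub_sq hsymm hsq hinner
  rw [← intervalIntegral_intervalIntegral_eq_integral_prod hsq,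
    ← intervalIntegral_intervalIntegral_eq_integral_prod hinner, htriangle, smul_eq_mul] at hpolar
  refine (intervalIntegral_intervalIntegral_eq_integral_prod hsub).trans (hpolar.trans ?_)
  ring

lemma memLp_two_restrict_uIoc_of_continuous [IsLocallyFiniteMeasure ν] {g : ℝ → E}
    (hg : Continuous g) : MemLp g 2 (ν.restrict (Ι a b)) :=
  (memLp_two_iff_integrable_sq_norm hg.aestronglyMeasurable).2
    (intervalIntegrable_iff.1 ((hg.norm.pow 2).intervalIntegrable a b))

end IntervalKernel

theorem stmt5_general {E : Type*} [NormedAddCommGroup E] [InnerProductSpace ℝ E]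
    [CompleteSpace E] {β : ℝ → ℝ} (hβ : ContDiff ℝ 2 β) (hβ''_even : (deriv (deriv β)).Even)
    {a b : ℝ} {g : ℝ → E} (hg : MemLp g 2 (volume.restrict (Ι a b))) :
    2 * (∫ μ in a..b, ⟪∫ σ in μ..a, deriv (deriv β) (μ - σ) • g σ, g μ⟫_ℝ)
        + (∫ σ in b..a, deriv β (σ - b) * ‖g σ‖ ^ 2)
        + (∫ σ in a..b, deriv β (σ - a) * ‖g σ‖ ^ 2)
      = (1 / 2) * ∫ σ in a..b, ∫ μ in a..b, deriv (deriv β) (μ - σ) * ‖g μ - g σ‖ ^ 2 := by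
  have hA : ContDiff ℝ 1 (deriv β) := hβ.deriv'
  have hk : Continuous fun p : ℝ × ℝ ↦ deriv (deriv β) (p.1 - p.2) :=
    (hA.continuous_deriv le_rfl).comp (by fun_prop)
  have hk_symm (p : ℝ × ℝ) : deriv (deriv β) (p.2 - p.1) = deriv (deriv β) (p.1 - p.2) := by
    rw [← hβ''_even, neg_sub]
  have hg_int : IntervalIntegrable g volume a b :=
    intervalIntegrable_iff.2 (hg.integrable one_le_two)
  have hg_sq : IntervalIntegrable (fun x ↦ ‖g x‖ ^ 2) volume a b :=
    intervalIntegrable_iff.2 (hg.integrable_norm_pow two_ne_zero)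
  have hI := intervalIntegral_inner_intervalIntegral_smul hk hg_int
  have hφ := intervalIntegral_comp_sub_smul_add_comp_sub_smul hA hg_sq
  have hsub := intervalIntegral_mul_norm_sub_sq hk hk_symm hg
  have hsub_symm (σ μ : ℝ) : deriv (deriv β) (μ - σ) * ‖g μ - g σ‖ ^ 2
      = deriv (deriv β) (σ - μ) * ‖g σ - g μ‖ ^ 2 := by
    rw [← hβ''_even, neg_sub, norm_sub_rev]
  simp only [smul_eq_mul] at hφ
  calc _ = (1 / 2) * ∫ σ in a..b, ∫ μ in a..b, deriv (deriv β) (σ - μ) * ‖g σ - g μ‖ ^ 2 := by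
        rw [hI, add_assoc, hφ, hsub]
        ring
    _ = _ := congrArg _ <| intervalIntegral.integral_congr fun σ _ ↦
        intervalIntegral.integral_congr fun μ _ ↦ hsub_symm μ σ

/-- With `β` a `C²` even function and `g` continuous, setting
`I_β(a,b) = ∫_a^b (∫_μ^a β''(μ-σ) g σ dσ) g μ dμ` and
`φ^β(a,b) = ∫_b^a β'(σ-b) (g σ)² dσ`, one has
`2 I_β(a,b) + φ^β(a,b) + φ^β(b,a) = (1/2) ∫_a^b ∫_a^b β''(μ-σ) (g μ - g σ)² dμ dσ`. -/
theorem stmt5 (β : ℝ → ℝ) (hβC2 : ContDiff ℝ 2 β) (hβeven : ∀ r : ℝ, β (-r) = β r)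
    (g : ℝ → ℝ) (hg : Continuous g) :
    ∀ a b : ℝ,
      2 * (∫ μ in a..b, (∫ σ in μ..a, deriv (deriv β) (μ - σ) * g σ) * g μ)
          + (∫ σ in b..a, deriv β (σ - b) * (g σ) ^ 2)
          + (∫ σ in a..b, deriv β (σ - a) * (g σ) ^ 2)
        = (1 / 2) * ∫ σ in a..b, ∫ μ in a..b, deriv (deriv β) (μ - σ) * (g μ - g σ) ^ 2 := by
  intro a b
  have hβ''_even : (deriv (deriv β)).Even := even_deriv_of_odd (odd_deriv_of_even hβeven)
  simpa [mul_comm] using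
    stmt5_general hβC2 hβ''_even (memLp_two_restrict_uIoc_of_continuous hg)
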